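/- Let D be a cone metric on X, d the induced real-valued function, T : X → X a map, a₁,…,a₅ ≥ 0 with a₁ + a₂ + a₃ + a₄ + a₅ < 1, and x,y ∈ X. If D(Tx,Ty) ≤ a₁·D(x,y) + a₂·D(x,Tx) + a₃·D(y,Ty) + a₄·D(x,Ty) + a₅·D(y,Tx), then d(Tx,Ty) ≤ a₁·d(x,y) + a₂·d(x,Tx) + a₃·d(y,Ty) + a₄·d(x,Ty) + a₅·d(y,Tx). -/

import Mathlib

/-!
Choose `uᵢ` above each of the five values of `D` on the right-hand side with norm within `ε` of the
corresponding infimum. The cone order is compatible with nonnegative combinations, so `∑ aᵢ • uᵢ`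
lies above `D (T x) (T y)`, and its norm is at most `∑ aᵢ dᵢ + ε` because `∑ aᵢ < 1`.
-/

open Filter Topology

/-- A cone in a real Banach space `E`. -/
structure IsCone (E : Type*) [NormedAddCommGroup E] [NormedSpace ℝ E] (P : Set E) : Prop where
  closed : IsClosed P
  nonempty : P.Nonempty
  ne_singleton_zero : P ≠ {0}
  combo_mem : ∀ a b : ℝ, 0 ≤ a → 0 ≤ b → ∀ x y : E, x ∈ P → y ∈ P → a • x + b • y ∈ P
  eq_zero_of_mem_of_neg_mem : ∀ x : E, x ∈ P → -x ∈ P → x = 0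

/-- `x ≤ y` with respect to the cone `P`, i.e. `y - x ∈ P`. -/
def coneLe {E : Type*} [NormedAddCommGroup E] (P : Set E) (x y : E) : Prop :=
  y - x ∈ P

/-- `x ≪ y` with respect to the cone `P`, i.e. `y - x ∈ interior P`. -/
def coneLt {E : Type*} [NormedAddCommGroup E] (P : Set E) (x y : E) : Prop :=
  y - x ∈ interior P

/-- `D : X × X → E` is a cone metric with respect to the cone `P`. -/
structure IsConeMetric {E : Type*} [NormedAddCommGroup E] (P : Set E)
    {X : Type*} (D : X → X → E) : Prop where
  nonneg : ∀ x y : X, coneLe P 0 (D x y)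
  eq_zero_iff : ∀ x y : X, (D x y = 0 ↔ x = y)
  symm : ∀ x y : X, D x y = D y x
  triangle : ∀ x y z : X, coneLe P (D x y) (D x z + D z y)

/-- The induced real-valued function `d(x,y) = inf {‖u‖ : D x y ≤ u}`. -/
noncomputable def inducedDist {E : Type*} [NormedAddCommGroup E] (P : Set E)
    {X : Type*} (D : X → X → E) (x y : X) : ℝ :=
  sInf {r : ℝ | ∃ u : E, r = ‖u‖ ∧ coneLe P (D x y) u}

theorem inducedDist_le_norm {E X : Type*} [NormedAddCommGroup E] {P : Set E} {D : X → X → E}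
    {x y : X} {u : E} (hu : coneLe P (D x y) u) : inducedDist P D x y ≤ ‖u‖ := by
  refine csInf_le ⟨0, ?_⟩ ⟨u, rfl, hu⟩
  rintro r ⟨v, rfl, -⟩
  exact norm_nonneg v

theorem exists_norm_lt_inducedDist_add {E X : Type*} [NormedAddCommGroup E] [NormedSpace ℝ E]
    {P : Set E} (hP : IsCone E P) (D : X → X → E) (x y : X) {ε : ℝ} (hε : 0 < ε) :
    ∃ u : E, coneLe P (D x y) u ∧ ‖u‖ < inducedDist P D x y + ε := by
  -- The set of upper bounds is nonempty: translate any point of `P` by `D x y`.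
  obtain ⟨p, hp⟩ := hP.nonempty
  have hne : {r : ℝ | ∃ u : E, r = ‖u‖ ∧ coneLe P (D x y) u}.Nonempty :=
    ⟨_, D x y + p, rfl, by simpa [coneLe] using hp⟩
  obtain ⟨r, ⟨u, rfl, hu⟩, hr⟩ := Real.lt_sInf_add_pos hne hε
  exact ⟨u, hu, hr⟩

theorem stmt17 {E X : Type*} [NormedAddCommGroup E] [NormedSpace ℝ E] [CompleteSpace E]
    [Nonempty X] (P : Set E) (hP : IsCone E P) (hPint : (interior P).Nonempty)
    (D : X → X → E) (hD : IsConeMetric P D) (T : X → X) (a₁ a₂ a₃ a₄ a₅ : ℝ)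
    (h1 : 0 ≤ a₁) (h2 : 0 ≤ a₂) (h3 : 0 ≤ a₃) (h4 : 0 ≤ a₄) (h5 : 0 ≤ a₅)
    (hsum : a₁ + a₂ + a₃ + a₄ + a₅ < 1) (x y : X)
    (h : coneLe P (D (T x) (T y))
      (a₁ • D x y + a₂ • D x (T x) + a₃ • D y (T y) + a₄ • D x (T y) + a₅ • D y (T x))) :
    inducedDist P D (T x) (T y) ≤
      a₁ * inducedDist P D x y + a₂ * inducedDist P D x (T x) +
        a₃ * inducedDist P D y (T y) + a₄ * inducedDist P D x (T y) +
        a₅ * inducedDist P D y (T x) := by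
  have hadd : ∀ {v w : E}, v ∈ P → w ∈ P → v + w ∈ P := fun {v w} hv hw => by
    simpa using hP.combo_mem 1 1 zero_le_one zero_le_one v w hv hw
  have hsmul : ∀ {a : ℝ} {v : E}, 0 ≤ a → v ∈ P → a • v ∈ P := fun {a v} ha hv => by
    simpa using hP.combo_mem a 0 ha le_rfl v v hv hv
  refine le_of_forall_pos_le_add fun ε hε => ?_
  obtain ⟨u₁, hu₁, hn₁⟩ := exists_norm_lt_inducedDist_add hP D x y hε
  obtain ⟨u₂, hu₂, hn₂⟩ := exists_norm_lt_inducedDist_add hP D x (T x) hε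
  obtain ⟨u₃, hu₃, hn₃⟩ := exists_norm_lt_inducedDist_add hP D y (T y) hε
  obtain ⟨u₄, hu₄, hn₄⟩ := exists_norm_lt_inducedDist_add hP D x (T y) hε
  obtain ⟨u₅, hu₅, hn₅⟩ := exists_norm_lt_inducedDist_add hP D y (T x) hε
  have hle : coneLe P (D (T x) (T y))
      (a₁ • u₁ + a₂ • u₂ + a₃ • u₃ + a₄ • u₄ + a₅ • u₅) := by
    have key := hadd h (hadd (hadd (hadd (hadd (hsmul h1 hu₁) (hsmul h2 hu₂)) (hsmul h3 hu₃))
      (hsmul h4 hu₄)) (hsmul h5 hu₅))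
    unfold coneLe
    convert key using 1
    simp only [smul_sub]
    abel
  have hnorm : ∀ {a : ℝ} (u : E), 0 ≤ a → ‖a • u‖ = a * ‖u‖ := fun u ha => by
    rw [norm_smul, Real.norm_of_nonneg ha]
  calc inducedDist P D (T x) (T y)
      ≤ ‖a₁ • u₁ + a₂ • u₂ + a₃ • u₃ + a₄ • u₄ + a₅ • u₅‖ := inducedDist_le_norm hle
    _ ≤ ‖a₁ • u₁‖ + ‖a₂ • u₂‖ + ‖a₃ • u₃‖ + ‖a₄ • u₄‖ + ‖a₅ • u₅‖ :=
        norm_add_le_of_le (norm_add_le_of_le (norm_add₃_le) le_rfl) le_rfl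
    _ = a₁ * ‖u₁‖ + a₂ * ‖u₂‖ + a₃ * ‖u₃‖ + a₄ * ‖u₄‖ + a₅ * ‖u₅‖ := by
        rw [hnorm u₁ h1, hnorm u₂ h2, hnorm u₃ h3, hnorm u₄ h4, hnorm u₅ h5]
    _ ≤ _ := by
        linarith [mul_le_mul_of_nonneg_left hn₁.le h1, mul_le_mul_of_nonneg_left hn₂.le h2,
          mul_le_mul_of_nonneg_left hn₃.le h3, mul_le_mul_of_nonneg_left hn₄.le h4,
          mul_le_mul_of_nonneg_left hn₅.le h5, mul_le_mul_of_nonneg_right hsum.le hε.le]
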